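/- Let λ > 0 and β ∈ (0,1]. For every n ∈ ℕ₀, the generalized Appell polynomial at zero satisfies C_n^{λ,β}(0) = ∑_{j=0}^n (−1)^j j! B_{n,j}(M̃_{λ,β}(1), M̃_{λ,β}(2), …, M̃_{λ,β}(n−j+1)), where B_{n,j} are the Bell polynomials and M̃_{λ,β}(m) := m! λ^m / Γ(mβ + 1). -/

import Mathlib

/-!
`C_n^{λ,β}(0)` is the `n`-th derivative at `0` of `1 / f`, where `f z = E_β(λz)` has the derivatives
`M̃_{λ,β}(m)` at `0`. For any smooth `f` with `f x ≠ 0`, the Leibniz rule makes the Taylor series of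
`1 / f` the inverse of the Taylor series `F` of `f`. With `F₀` the constant
coefficient, expanding that inverse as a geometric series in `F - F₀` and each power of `F - F₀` by
the multinomial theorem produces the Bell polynomials.
-/

open MeasureTheory Finset
open scoped ENNReal NNReal

noncomputable section

/-- The complex Mittag-Leffler function `E_β(z) = ∑ zⁿ / Γ(βn+1)`. -/
def mittagLeffler (β : ℝ) (z : ℂ) : ℂ :=
  ∑' n : ℕ, z ^ n / (Complex.Gamma ((β * n + 1 : ℝ) : ℂ))

/-- The real Mittag-Leffler function `E_β(x) = ∑ xⁿ / Γ(βn+1)`. -/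
def mittagLefflerR (β : ℝ) (x : ℝ) : ℝ :=
  ∑' n : ℕ, x ^ n / Real.Gamma (β * n + 1)

/-- The fractional Poisson measure `π_{λ,β} = ∑_k (λᵏ/k!) E_β⁽ᵏ⁾(-λ) δ_k` on `ℝ`. -/
def fracPoisson (lam β : ℝ) : Measure ℝ :=
  Measure.sum fun k : ℕ =>
    ENNReal.ofReal (lam ^ k / k.factorial * iteratedDeriv k (mittagLefflerR β) (-lam)) •
      Measure.dirac (k : ℝ)

/-- The Poisson measure with rate `μ` on `ℝ`, `π_μ({k}) = (μᵏ/k!) e^{-μ}`. -/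
def poissonMeasureR (μ : ℝ) : Measure ℝ :=
  Measure.sum fun k : ℕ =>
    ENNReal.ofReal (μ ^ k / k.factorial * Real.exp (-μ)) • Measure.dirac (k : ℝ)

/-- The generalized Appell polynomials
`C_n^{λ,β}(x) = dⁿ/dzⁿ [e^{x log(1+z)} / E_β(λz)]` at `z = 0`. -/
def genAppell (lam β : ℝ) (n : ℕ) (x : ℂ) : ℂ :=
  iteratedDeriv n
    (fun z : ℂ => Complex.exp (x * Complex.log (1 + z)) / mittagLeffler β (lam * z)) 0

/-- The Appell polynomials `A_n^{λ,β}(x) = dⁿ/dzⁿ [e^{zx} / E_β(λ(eᶻ-1))]` at `z = 0`. -/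
def appell (lam β : ℝ) (n : ℕ) (x : ℂ) : ℂ :=
  iteratedDeriv n
    (fun z : ℂ => Complex.exp (z * x) / mittagLeffler β (lam * (Complex.exp z - 1))) 0

/-- Stirling numbers of the first kind, via `(log(1+z))^k = k! ∑_{n≥k} s(n,k) zⁿ/n!`. -/
def stirlingFst (n k : ℕ) : ℝ :=
  iteratedDeriv n (fun x : ℝ => (Real.log (1 + x)) ^ k) 0 / k.factorial

/-- Stirling numbers of the second kind, via `(eᶻ-1)^k = k! ∑_{n≥k} S(n,k) zⁿ/n!`. -/
def stirlingSnd (n k : ℕ) : ℝ :=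
  iteratedDeriv n (fun x : ℝ => (Real.exp x - 1) ^ k) 0 / k.factorial

/-- The `n`-th moment of the fractional Poisson measure. -/
def fpMoment (lam β : ℝ) (n : ℕ) : ℝ := ∫ x, x ^ n ∂(fracPoisson lam β)

/-- `M̃_{λ,β}(m) = m! λᵐ / Γ(mβ+1)`. -/
def tildeM (lam β : ℝ) (m : ℕ) : ℝ := m.factorial * lam ^ m / Real.Gamma (m * β + 1)

/-- The (partial exponential) Bell polynomials `B_{n,k}(x₁, …, x_{n-k+1})`. -/
def bellPoly (n k : ℕ) (x : ℕ → ℂ) : ℂ :=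
  ∑ j ∈ (Fintype.piFinset fun _ : Fin (n - k + 1) => Finset.range (n + 1)).filter
      (fun j => (∑ i, j i) = k ∧ (∑ i, (i.1 + 1) * j i) = n),
    (n.factorial : ℂ) / (∏ i, ((j i).factorial : ℂ)) *
      ∏ i, (x (i.1 + 1) / ((i.1 + 1).factorial : ℂ)) ^ j i

section FormalPowerSeries

open PowerSeries

lemma coeff_pow_eq_sum_piAntidiag {R : Type*} [CommSemiring R] (A : R⟦X⟧) (m j : ℕ) :
    coeff m (A ^ j) =
      ∑ k ∈ (piAntidiag (univ : Finset (Fin (m + 1))) j).filter (fun k => ∑ i, i.1 * k i = m),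
        (Nat.multinomial univ k : R) * ∏ i, coeff i.1 A ^ k i := by
  have htrunc : (trunc (m + 1) A : R⟦X⟧) = ∑ i : Fin (m + 1), monomial i.1 (coeff i.1 A) := by
    rw [trunc_apply, Nat.Ico_zero_eq_range, sum_range, ← Polynomial.coeToPowerSeries.ringHom_apply,
      map_sum]
    simp only [Polynomial.coeToPowerSeries.ringHom_apply, Polynomial.coe_monomial]
  have hprod (k : Fin (m + 1) → ℕ) :
      ∏ i, monomial i.1 (coeff i.1 A) ^ k i =
        monomial (∑ i, i.1 * k i) (∏ i, coeff i.1 A ^ k i) := by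
    simp only [monomial_eq_C_mul_X_pow, mul_pow, prod_mul_distrib, ← pow_mul, prod_pow_eq_pow_sum,
      map_prod, map_pow]
  rw [← coeff_coe_trunc_of_lt m.lt_succ_self, ← trunc_trunc_pow,
    coeff_coe_trunc_of_lt m.lt_succ_self, htrunc, sum_pow_eq_sum_piAntidiag, map_sum, sum_filter]
  refine sum_congr rfl fun k _ => ?_
  rw [hprod, ← map_natCast (C (R := R)), coeff_C_mul, coeff_monomial, mul_ite, mul_zero]
  simp only [eq_comm]

lemma coeff_sub_constantCoeff_pow {R : Type*} [CommRing R] (F : R⟦X⟧) {n j : ℕ} (hj : j ≤ n) :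
    coeff n ((F - C (constantCoeff F)) ^ j) =
      ∑ k ∈ (piAntidiag (univ : Finset (Fin (n - j + 1))) j).filter
          (fun k => ∑ i, (i.1 + 1) * k i = n),
        (Nat.multinomial univ k : R) * ∏ i, coeff (i.1 + 1) F ^ k i := by
  rw [sub_const_eq_X_mul_shift, mul_pow, coeff_X_pow_mul', if_pos hj, coeff_pow_eq_sum_piAntidiag]
  simp only [coeff_mk]
  refine sum_congr (filter_congr fun k hk => ?_) fun _ _ => rfl
  have hsum : ∑ i, k i = j := (mem_piAntidiag.mp hk).1
  simp only [add_mul, one_mul, sum_add_distrib, hsum]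
  omega

lemma bellPoly_eq_sum_piAntidiag {n j : ℕ} (hj : j ≤ n) (x : ℕ → ℂ) :
    bellPoly n j x =
      ∑ k ∈ (piAntidiag (univ : Finset (Fin (n - j + 1))) j).filter
          (fun k => ∑ i, (i.1 + 1) * k i = n),
        (n.factorial : ℂ) / (∏ i, ((k i).factorial : ℂ)) *
          ∏ i, (x (i.1 + 1) / ((i.1 + 1).factorial : ℂ)) ^ k i := by
  refine sum_congr ?_ fun _ _ => rfl
  ext k
  simp only [mem_filter, Fintype.mem_piFinset, mem_range, mem_piAntidiag, mem_univ, implies_true,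
    and_true, and_iff_right_iff_imp]
  rintro ⟨hsum, -⟩ i
  have hle : k i ≤ ∑ i, k i := single_le_sum (fun _ _ => Nat.zero_le _) (mem_univ i)
  omega

lemma factorial_mul_coeff_sub_constantCoeff_pow (F : ℂ⟦X⟧) {n j : ℕ} (hj : j ≤ n) :
    (n.factorial : ℂ) * coeff n ((F - C (constantCoeff F)) ^ j) =
      j.factorial * bellPoly n j (fun m => m.factorial * coeff m F) := by
  rw [coeff_sub_constantCoeff_pow F hj, bellPoly_eq_sum_piAntidiag hj, mul_sum, mul_sum]
  refine sum_congr rfl fun k hk => ?_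
  have hmultinomial :
      (∏ i, ((k i).factorial : ℂ)) * (Nat.multinomial univ k : ℂ) = j.factorial := by
    have hsum : ∑ i, k i = j := (mem_piAntidiag.mp (mem_filter.mp hk).1).1
    exact_mod_cast (Nat.multinomial_spec univ k).trans (congrArg Nat.factorial hsum)
  have hprod : ∏ i, ((k i).factorial : ℂ) ≠ 0 :=
    prod_ne_zero_iff.mpr fun i _ => Nat.cast_ne_zero.mpr (k i).factorial_ne_zero
  have hcoeff (i : ℕ) : (i.factorial : ℂ) * coeff i F / i.factorial = coeff i F :=
    mul_div_cancel_left₀ _ (Nat.cast_ne_zero.mpr i.factorial_ne_zero)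
  simp only [hcoeff, ← hmultinomial]
  field_simp

lemma coeff_eq_sum_coeff_pow_of_one_sub_mul_eq_one {R : Type*} [CommRing R] {Q G : R⟦X⟧}
    (hQ : constantCoeff Q = 0) (h : (1 - Q) * G = 1) (n : ℕ) :
    coeff n G = ∑ j ∈ range (n + 1), coeff n (Q ^ j) := by
  have hG : G = (∑ j ∈ range (n + 1), Q ^ j) + Q ^ (n + 1) * G := by
    linear_combination (∑ j ∈ range (n + 1), Q ^ j) * h - G * geom_sum_mul_neg Q (n + 1)
  have htail : X ^ (n + 1) ∣ Q ^ (n + 1) * G :=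
    (pow_dvd_pow_of_dvd (X_dvd_iff.mpr hQ) _).mul_right _
  rw [hG, map_add, X_pow_dvd_iff.mp htail n n.lt_succ_self, add_zero, map_sum]

lemma coeff_inv_eq_sum_coeff_sub_constantCoeff_pow {K : Type*} [Field K] {F : K⟦X⟧}
    (hF : constantCoeff F ≠ 0) (n : ℕ) :
    coeff n F⁻¹ = ∑ j ∈ range (n + 1),
      (-1) ^ j / constantCoeff F ^ (j + 1) * coeff n ((F - C (constantCoeff F)) ^ j) := by
  set a := constantCoeff F
  have hCa : C a * C a⁻¹ = (1 : K⟦X⟧) := by rw [← map_mul, mul_inv_cancel₀ hF, map_one]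
  set Q := C (-a⁻¹) * (F - C a) with hQ
  have hQ0 : constantCoeff Q = 0 := by simp [hQ, a]
  have hinv : (1 - Q) * (C a * F⁻¹) = 1 := by
    have hmul := PowerSeries.mul_inv_cancel F hF
    rw [hQ, map_neg]
    linear_combination (F * F⁻¹ - C a * F⁻¹) * hCa + hmul
  have hcoeff := coeff_eq_sum_coeff_pow_of_one_sub_mul_eq_one hQ0 hinv n
  rw [coeff_C_mul, ← eq_inv_mul_iff_mul_eq₀ hF, mul_sum] at hcoeff
  rw [hcoeff]
  refine sum_congr rfl fun j _ => ?_
  rw [hQ, mul_pow, ← map_pow, coeff_C_mul, neg_pow, inv_pow]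
  field_simp
  ring

end FormalPowerSeries

section TaylorSeries

open PowerSeries
open scoped ContDiff

variable {𝕜 𝕜' : Type*} [NontriviallyNormedField 𝕜] [NormedField 𝕜'] [NormedAlgebra 𝕜 𝕜']

/-- The Taylor series of `f` at `x` as a formal power series in the increment `X`, meaningful where
`f` is smooth. It turns the Leibniz rule into multiplication of power series, so that the derivatives
of `1 / f` can be computed in the ring of power series. -/
def taylorSeries (f : 𝕜 → 𝕜') (x : 𝕜) : 𝕜'⟦X⟧ :=
  PowerSeries.mk fun m => iteratedDeriv m f x / m.factorial

variable {f g : 𝕜 → 𝕜'} {x : 𝕜}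

lemma constantCoeff_taylorSeries : constantCoeff (taylorSeries f x) = f x := by
  simp [taylorSeries, ← coeff_zero_eq_constantCoeff_apply]

lemma factorial_mul_coeff_taylorSeries [CharZero 𝕜'] (m : ℕ) :
    m.factorial * coeff m (taylorSeries f x) = iteratedDeriv m f x := by
  rw [taylorSeries, coeff_mk, mul_div_cancel₀ _ (Nat.cast_ne_zero.mpr m.factorial_ne_zero)]

lemma taylorSeries_mul [CharZero 𝕜'] (hf : ContDiffAt 𝕜 ∞ f x) (hg : ContDiffAt 𝕜 ∞ g x) :
    taylorSeries (f * g) x = taylorSeries f x * taylorSeries g x := by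
  ext m
  simp only [taylorSeries, coeff_mul, coeff_mk, Nat.sum_antidiagonal_eq_sum_range_succ_mk,
    Nat.succ_eq_add_one]
  rw [iteratedDeriv_mul (hf.of_le (mod_cast le_top)) (hg.of_le (mod_cast le_top)), sum_div]
  refine sum_congr rfl fun i hi => ?_
  rw [Nat.cast_choose _ (by grind)]
  field_simp [Nat.factorial_ne_zero]

lemma taylorSeries_inv [CharZero 𝕜'] (hf : ContDiffAt 𝕜 ∞ f x) (hx : f x ≠ 0) :
    taylorSeries f⁻¹ x = (taylorSeries f x)⁻¹ := by
  have hmul : f⁻¹ * f =ᶠ[nhds x] fun _ => 1 := by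
    filter_upwards [hf.continuousAt.eventually_ne hx] with y hy
    simp [hy]
  rw [eq_inv_iff_mul_eq_one (by rwa [constantCoeff_taylorSeries]),
    ← taylorSeries_mul (hf.inv hx) hf]
  ext m
  rw [taylorSeries, coeff_mk, hmul.iteratedDeriv_eq, iteratedDeriv_const, coeff_one]
  split_ifs with hm <;> simp [hm]

lemma iteratedDeriv_inv_eq_sum_bellPoly [NormedAlgebra 𝕜 ℂ] {f : 𝕜 → ℂ}
    (hf : ContDiffAt 𝕜 ∞ f x) (hx : f x ≠ 0) (n : ℕ) :
    iteratedDeriv n f⁻¹ x = ∑ j ∈ range (n + 1),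
      (-1) ^ j * (j.factorial : ℂ) / f x ^ (j + 1) *
        bellPoly n j (fun m => iteratedDeriv m f x) := by
  set F := taylorSeries f x
  have hF : constantCoeff F = f x := constantCoeff_taylorSeries
  rw [← factorial_mul_coeff_taylorSeries, taylorSeries_inv hf hx,
    coeff_inv_eq_sum_coeff_sub_constantCoeff_pow (hF ▸ hx), mul_sum]
  refine sum_congr rfl fun j hj => ?_
  have hbell := factorial_mul_coeff_sub_constantCoeff_pow F (mem_range_succ_iff.mp hj)
  simp only [F, factorial_mul_coeff_taylorSeries] at hbell
  rw [mul_left_comm, hbell, hF]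
  ring

end TaylorSeries

section MittagLeffler

open FormalMultilinearSeries

lemma iteratedDeriv_eq_of_hasFPowerSeriesAt_ofScalars {𝕜 : Type*} [NontriviallyNormedField 𝕜]
    [CompleteSpace 𝕜] [CharZero 𝕜] {f : 𝕜 → 𝕜} {a : ℕ → 𝕜} {x : 𝕜}
    (h : HasFPowerSeriesAt f (ofScalars 𝕜 a) x) (m : ℕ) :
    iteratedDeriv m f x = m.factorial * a m := by
  have hcoeff := congrArg (fun p => p.coeff m)
    (h.eq_formalMultilinearSeries h.analyticAt.hasFPowerSeriesAt)
  simp only [coeff_ofScalars] at hcoeff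
  rw [hcoeff, mul_div_cancel₀ _ (Nat.cast_ne_zero.mpr m.factorial_ne_zero)]

lemma hasFPowerSeriesAt_comp_const_mul {𝕜 : Type*} [NontriviallyNormedField 𝕜] {f : 𝕜 → 𝕜}
    {a : ℕ → 𝕜} (h : HasFPowerSeriesAt f (ofScalars 𝕜 a) 0) (c : 𝕜) :
    HasFPowerSeriesAt (fun z => f (c * z)) (ofScalars 𝕜 fun m => c ^ m * a m) 0 := by
  rw [hasFPowerSeriesAt_iff] at h ⊢
  have hc : Filter.Tendsto (fun z => c * z) (nhds 0) (nhds 0) := by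
    simpa using (continuous_const_mul c).tendsto 0
  filter_upwards [hc.eventually h] with z hz
  simpa [coeff_ofScalars, mul_pow, mul_assoc, mul_left_comm] using hz

lemma exists_pos_forall_le_Gamma : ∃ c > 0, ∀ x > 0, c ≤ Real.Gamma x := by
  obtain ⟨x₀, hx₀, hmin⟩ := Real.exists_isMinOn_Gamma_Ioi
  exact ⟨Real.Gamma x₀, Real.Gamma_pos_of_pos (one_pos.trans hx₀.1), fun x hx => hmin hx⟩

variable {β : ℝ}

lemma hasFPowerSeriesAt_mittagLeffler (hβ : 0 ≤ β) :
    HasFPowerSeriesAt (mittagLeffler β)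
      (ofScalars ℂ fun m : ℕ => ((Real.Gamma (β * m + 1))⁻¹ : ℂ)) 0 := by
  set p := ofScalars ℂ fun m : ℕ => ((Real.Gamma (β * m + 1))⁻¹ : ℂ)
  obtain ⟨c, hc, hΓ⟩ := exists_pos_forall_le_Gamma
  have hbound (m : ℕ) : ‖p m‖ * (1 : NNReal) ^ m ≤ c⁻¹ := by
    have hm : c ≤ Real.Gamma (β * m + 1) := hΓ _ (by positivity)
    rw [ofScalars_norm, norm_inv, Complex.norm_real, Real.norm_of_nonneg (hc.le.trans hm)]
    simpa using inv_anti₀ hc hm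
  -- For `β = 0` the series is geometric, of radius exactly `1`.
  have hradius : 0 < p.radius := lt_of_lt_of_le (by simp) (p.le_radius_of_bound c⁻¹ hbound)
  have hsum : p.sum = mittagLeffler β := by
    ext z
    refine (ofScalars_sum_eq _ z).trans (tsum_congr fun m => ?_)
    rw [Complex.Gamma_ofReal, smul_eq_mul, div_eq_inv_mul]
  exact hsum ▸ (p.hasFPowerSeriesOnBall hradius).hasFPowerSeriesAt

lemma mittagLeffler_zero : mittagLeffler β 0 = 1 := by
  rw [mittagLeffler, tsum_eq_single 0 fun m hm => by simp [hm]]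
  simp

lemma iteratedDeriv_mittagLeffler_const_mul_zero (hβ : 0 ≤ β) (lam : ℝ) (m : ℕ) :
    iteratedDeriv m (fun z => mittagLeffler β (lam * z)) 0 = tildeM lam β m := by
  rw [iteratedDeriv_eq_of_hasFPowerSeriesAt_ofScalars
    (hasFPowerSeriesAt_comp_const_mul (hasFPowerSeriesAt_mittagLeffler hβ) lam), tildeM]
  push_cast
  rw [mul_comm β, div_eq_mul_inv, mul_assoc]

lemma contDiffAt_mittagLeffler_const_mul_zero (hβ : 0 ≤ β) (c : ℂ) {k : WithTop ℕ∞} :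
    ContDiffAt ℂ k (fun z => mittagLeffler β (c * z)) 0 :=
  (hasFPowerSeriesAt_comp_const_mul
    (hasFPowerSeriesAt_mittagLeffler hβ) c).analyticAt.contDiffAt

lemma genAppell_zero_right (lam β : ℝ) (n : ℕ) :
    genAppell lam β n 0 = iteratedDeriv n (fun z => mittagLeffler β (lam * z))⁻¹ 0 := by
  rw [genAppell]
  congr 1
  ext z
  simp

end MittagLeffler

theorem stmt18_general (lam : ℝ) {β : ℝ} (hβ : 0 ≤ β) (n : ℕ) :
    genAppell lam β n 0 =
      ∑ j ∈ Finset.range (n + 1), (-1 : ℂ) ^ j * (j.factorial : ℂ) *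
        bellPoly n j (fun m => ((tildeM lam β m : ℝ) : ℂ)) := by
  have hf0 : mittagLeffler β (lam * 0) = 1 := by rw [mul_zero, mittagLeffler_zero]
  rw [genAppell_zero_right, iteratedDeriv_inv_eq_sum_bellPoly
    (contDiffAt_mittagLeffler_const_mul_zero hβ lam) (hf0 ▸ one_ne_zero)]
  simp only [hf0, one_pow, div_one, iteratedDeriv_mittagLeffler_const_mul_zero hβ lam]

theorem stmt18 (lam β : ℝ) (hlam : 0 < lam) (hβ0 : 0 < β) (hβ1 : β ≤ 1) (n : ℕ) :
    genAppell lam β n 0 =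
      ∑ j ∈ Finset.range (n + 1), (-1 : ℂ) ^ j * (j.factorial : ℂ) *
        bellPoly n j (fun m => ((tildeM lam β m : ℝ) : ℂ)) := by
  exact stmt18_general lam hβ0.le n
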